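/- Topological completeness of S4DT1S for T₁ spaces: for every bimodal formula A, A ∈ S4DT1S if and only if A is valid in every dense-in-itself T₁ topological space. -/

import Mathlib

/-!
Soundness is a direct induction on derivations: (AT₁) holds because complements of points are
open, (DS) because no point is open.

For completeness, let `A` be underivable. The canonical frame of S4DT1S, whose points are the
maximal consistent theories, is an S4D-frame, a T₁-frame and a DS-frame (`canR_refl`, …,
`canRD_irrefl_dia`). Restricting it to the points equal or `R_D`-related to a fixed point omitting
`A` preserves truth (`ksat_canonical`) and makes any two distinct points `R_D`-related.

Such a frame `(W, R, R_D)` is the image of a dense-in-itself T₁ space `Blowup W` with the same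
modal theory. Every `R_D`-reflexive point is replaced by a copy of `ℕ`, every irreflexive point is
kept, and a set `U` is open when for each `x ∈ U` over `w` and each `v` with `R w v`, the fibre
over `v` is contained in `U` up to finitely many points. Singletons are then closed. Since
irreflexive points are `R`-minimal, every `R`-successor of `w` other than `w` itself has an
infinite fibre. Hence neighbourhoods of a point over `w` meet the fibre of every `R`-successor of
`w`, which gives truth preservation for `□`, and the DS-condition rules out isolated points.
-/


/-- Bimodal formulas: propositional letters, falsum, implication, box, and
the difference modality `[≠]` (called `dbox` here). -/
inductive BForm : Type
  | var : ℕ → BForm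
  | bot : BForm
  | imp : BForm → BForm → BForm
  | box : BForm → BForm
  | dbox : BForm → BForm
  deriving DecidableEq

namespace BForm

/-- Classical negation. -/
def neg (A : BForm) : BForm := imp A bot

/-- Classical conjunction. -/
def conj (A B : BForm) : BForm := neg (imp A (neg B))

/-- `◇A = ¬□¬A`. -/
def dia (A : BForm) : BForm := neg (box (neg A))

/-- `⟨≠⟩A = ¬[≠]¬A`. -/
def ddia (A : BForm) : BForm := neg (dbox (neg A))

end BForm

/-- Truth at a point of a Kripke model over a frame `(W, R, R_D)`. -/
def ksat {W : Type} (R RD : W → W → Prop) (θ : ℕ → Set W) : W → BForm → Prop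
  | x, .var n => x ∈ θ n
  | _, .bot => False
  | x, .imp A B => ksat R RD θ x A → ksat R RD θ x B
  | x, .box A => ∀ y, R x y → ksat R RD θ y A
  | x, .dbox A => ∀ y, RD x y → ksat R RD θ y A

/-- Validity in a Kripke frame: truth at every point under every valuation. -/
def kvalid {W : Type} (R RD : W → W → Prop) (A : BForm) : Prop :=
  ∀ (θ : ℕ → Set W) (x : W), ksat R RD θ x A

/-- Truth at a point of a topological model. -/
def tsat {X : Type} [TopologicalSpace X] (θ : ℕ → Set X) : X → BForm → Prop
  | x, .var n => x ∈ θ n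
  | _, .bot => False
  | x, .imp A B => tsat θ x A → tsat θ x B
  | x, .box A => ∃ U : Set X, IsOpen U ∧ x ∈ U ∧ ∀ y ∈ U, tsat θ y A
  | x, .dbox A => ∀ y, y ≠ x → tsat θ y A

/-- Validity in a topological space. -/
def tvalid (X : Type) [TopologicalSpace X] (A : BForm) : Prop :=
  ∀ (θ : ℕ → Set X) (x : X), tsat θ x A

/-- Uniform substitution of formulas for propositional letters. -/
def substF (σ : ℕ → BForm) : BForm → BForm
  | .var n => σ n
  | .bot => .bot
  | .imp A B => .imp (substF σ A) (substF σ B)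
  | .box A => .box (substF σ A)
  | .dbox A => .dbox (substF σ A)

/-- Boolean evaluation of a formula, treating letters and modal formulas as atoms. -/
def beval (v : BForm → Bool) : BForm → Bool
  | .var n => v (.var n)
  | .bot => false
  | .imp A B => !(beval v A) || beval v B
  | .box A => v (.box A)
  | .dbox A => v (.dbox A)

/-- A classical tautology of the bimodal language. -/
def Tautology (A : BForm) : Prop := ∀ v : BForm → Bool, beval v A = true

/-- The letter `p`. -/
def pLet : BForm := .var 0
/-- The letter `q`. -/
def qLet : BForm := .var 1

/-- The least bimodal logic containing `K₂`, the S4D axioms and the extra axioms `Ax`,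
closed under modus ponens, uniform substitution, and both necessitation rules. -/
inductive Logic (Ax : Set BForm) : BForm → Prop
  | taut {A : BForm} : Tautology A → Logic Ax A
  | axKBox : Logic Ax (.imp (.box (.imp pLet qLet)) (.imp (.box pLet) (.box qLet)))
  | axKD : Logic Ax (.imp (.dbox (.imp pLet qLet)) (.imp (.dbox pLet) (.dbox qLet)))
  | axBD : Logic Ax (.imp pLet (.dbox (BForm.ddia pLet)))
  | ax4mD : Logic Ax (.imp (BForm.conj pLet (.dbox pLet)) (.dbox (.dbox pLet)))
  | axTBox : Logic Ax (.imp (.box pLet) pLet)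
  | ax4Box : Logic Ax (.imp (.box pLet) (.box (.box pLet)))
  | axDBox : Logic Ax (.imp (BForm.conj (.dbox pLet) pLet) (.box pLet))
  | extra {A : BForm} : A ∈ Ax → Logic Ax A
  | mp {A B : BForm} : Logic Ax (.imp A B) → Logic Ax A → Logic Ax B
  | subst {A : BForm} (σ : ℕ → BForm) : Logic Ax A → Logic Ax (substF σ A)
  | necBox {A : BForm} : Logic Ax A → Logic Ax (.box A)
  | necD {A : BForm} : Logic Ax A → Logic Ax (.dbox A)

/-- The axiom (DS): `[≠]p → ◇p`. -/
def dsAx : BForm := .imp (.dbox pLet) (BForm.dia pLet)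

/-- The axiom (AT₁): `[≠]p → [≠]□p`. -/
def at1Ax : BForm := .imp (.dbox pLet) (.dbox (.box pLet))

/-- The logic S4D. -/
def S4D : BForm → Prop := Logic ∅

/-- The logic S4DS = S4D + (DS). -/
def S4DS : BForm → Prop := Logic {dsAx}

/-- The logic S4DT1S = S4DS + (AT₁). -/
def S4DT1S : BForm → Prop := Logic {dsAx, at1Ax}

/-- `(W, R, R_D)` is an S4D-frame: `R` is reflexive and transitive, `R_D` is
symmetric and pseudo-transitive, and `R ⊆ R_D ∪ Id`. -/
structure IsS4DFrame {W : Type} (R RD : W → W → Prop) : Prop where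
  refl : ∀ x, R x x
  trans : ∀ ⦃x y z⦄, R x y → R y z → R x z
  symm : ∀ ⦃x y⦄, RD x y → RD y x
  ptrans : ∀ ⦃x y z⦄, RD x y → RD y z → x ≠ z → RD x z
  inc : ∀ ⦃x y⦄, R x y → RD x y ∨ x = y

/-- A T₁-frame: every `R_D`-irreflexive point is `R`-minimal. -/
def IsT1Frame {W : Type} (R RD : W → W → Prop) : Prop :=
  ∀ x, ¬ RD x x → ∀ y, R y x → y = x

/-- A DS-frame: every `R_D`-irreflexive point has an `R`-successor distinct from itself. -/
def IsDSFrame {W : Type} (R RD : W → W → Prop) : Prop :=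
  ∀ x, ¬ RD x x → ∃ y, y ≠ x ∧ R x y

/-- A cd-p-morphism from a topological space `X` onto a Kripke frame `(W, R, R_D)`. -/
structure IsCdPMorphism {X : Type} [TopologicalSpace X] {W : Type}
    (R RD : W → W → Prop) (f : X → W) : Prop where
  surj : Function.Surjective f
  cl : ∀ w : W, closure (f ⁻¹' {w}) = f ⁻¹' {v | R v w}
  diff : ∀ w : W, {x : X | ∃ y, y ≠ x ∧ f y = w} = f ⁻¹' {v | RD v w}

/-- A p-morphism between Kripke frames. -/
structure IsPMorphism {W W' : Type} (R RD : W → W → Prop) (R' RD' : W' → W' → Prop)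
    (f : W → W') : Prop where
  surj : Function.Surjective f
  forth : ∀ ⦃x y⦄, R x y → R' (f x) (f y)
  forthD : ∀ ⦃x y⦄, RD x y → RD' (f x) (f y)
  back : ∀ x z, R' (f x) z → ∃ y, R x y ∧ f y = z
  backD : ∀ x z, RD' (f x) z → ∃ y, RD x y ∧ f y = z

/-- The Alexandrov topology on `W` whose open sets are the `R`-upward-closed sets. -/
def alexandrov {W : Type} (R : W → W → Prop) : TopologicalSpace W where
  IsOpen U := ∀ ⦃x⦄, x ∈ U → ∀ ⦃y⦄, R x y → y ∈ U
  isOpen_univ := fun _ _ _ _ => trivial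
  isOpen_inter := fun _ _ hU hV x hx y hxy => ⟨hU hx.1 hxy, hV hx.2 hxy⟩
  isOpen_sUnion := fun _ hS x hx y hxy => by
    obtain ⟨U, hU, hxU⟩ := hx
    exact ⟨U, hU, hS U hU hxU hxy⟩

/-! ### Soundness -/

theorem tsat_substF {X : Type} [TopologicalSpace X] (θ : ℕ → Set X) (σ : ℕ → BForm) (A : BForm) :
    ∀ x, tsat θ x (substF σ A) ↔ tsat (fun n => {y | tsat θ y (σ n)}) x A := by
  induction A with
  | var n => intro x; rfl
  | bot => intro x; rfl
  | imp A B ihA ihB => intro x; simp only [substF, tsat, ihA, ihB]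
  | box A ih => intro x; simp only [substF, tsat, ih]
  | dbox A ih => intro x; simp only [substF, tsat, ih]

open Classical in
theorem beval_tsat {X : Type} [TopologicalSpace X] (θ : ℕ → Set X) (x : X) (A : BForm) :
    beval (fun B => decide (tsat θ x B)) A = true ↔ tsat θ x A := by
  induction A with
  | var n => simp [beval]
  | bot => simp [beval, tsat]
  | imp A B ihA ihB =>
    simp only [beval, tsat, ← ihA, ← ihB, Bool.or_eq_true, Bool.not_eq_true', imp_iff_not_or,
      Bool.not_eq_true]
  | box A ih => simp [beval]
  | dbox A ih => simp [beval]

theorem soundness {X : Type} [TopologicalSpace X] (hT : ∀ x : X, IsClosed ({x} : Set X))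
    (hD : ∀ x : X, ¬ IsOpen ({x} : Set X)) {A : BForm} (h : S4DT1S A) : tvalid X A := by
  induction h with
  | taut h => intro θ x; exact (beval_tsat θ x _).1 (h _)
  | axKBox =>
    rintro θ x ⟨U, hU, hxU, h⟩ ⟨V, hV, hxV, h'⟩
    exact ⟨U ∩ V, hU.inter hV, ⟨hxU, hxV⟩, fun y hy => h y hy.1 (h' y hy.2)⟩
  | axKD => intro θ x h h' y hy; exact h y hy (h' y hy)
  | axBD => intro θ x h y hy h'; exact h' x hy.symm h
  | ax4mD =>
    intro θ x h y hy z hz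
    by_contra hc
    refine h fun h1 h2 => hc ?_
    by_cases hzx : z = x
    · exact hzx ▸ h1
    · exact h2 z hzx
  | axTBox => rintro θ x ⟨U, hU, hxU, h⟩; exact h x hxU
  | ax4Box => rintro θ x ⟨U, hU, hxU, h⟩; exact ⟨U, hU, hxU, fun y hy => ⟨U, hU, hy, h⟩⟩
  | axDBox =>
    intro θ x h
    refine ⟨Set.univ, isOpen_univ, trivial, fun y _ => ?_⟩
    by_contra hc
    refine h fun h1 h2 => hc ?_
    by_cases hyx : y = x
    · exact hyx ▸ h2
    · exact h1 y hyx
  | extra h =>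
    rcases h with rfl | rfl
    · rintro θ x h ⟨U, hU, hxU, h'⟩
      refine hD x ?_
      have : U = {x} := by
        ext y
        refine ⟨fun hy => ?_, fun hy => hy ▸ hxU⟩
        by_contra hyx
        exact h' y hy (h y hyx)
      exact this ▸ hU
    · intro θ x h y hy
      exact ⟨{x}ᶜ, (hT x).isOpen_compl, hy, fun z hz => h z hz⟩
  | mp _ _ ih1 ih2 => intro θ x; exact ih1 θ x (ih2 θ x)
  | subst σ _ ih => intro θ x; exact (tsat_substF θ σ _ x).2 (ih _ x)
  | necBox _ ih => intro θ x; exact ⟨Set.univ, isOpen_univ, trivial, fun y _ => ih θ y⟩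
  | necD _ ih => intro θ x y _; exact ih θ y

/-! ### Maximal consistent theories -/

/-- A theory: a set of formulas containing S4DT1S and closed under modus ponens. -/
structure IsTheory (T : Set BForm) : Prop where
  ax : ∀ {A}, S4DT1S A → A ∈ T
  mp : ∀ {A B}, BForm.imp A B ∈ T → A ∈ T → B ∈ T

/-- A maximal consistent theory, encoded as a consistent theory deciding every formula. -/
structure IsMaxTheory (T : Set BForm) : Prop extends IsTheory T where
  bot : BForm.bot ∉ T
  compl : ∀ A, A ∈ T ∨ BForm.neg A ∈ T

theorem isTheory_logic : IsTheory {A | S4DT1S A} := ⟨fun h => h, fun h h' => Logic.mp h h'⟩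

theorem IsTheory.taut {T : Set BForm} (hT : IsTheory T) {A : BForm} (h : Tautology A) : A ∈ T :=
  hT.ax (Logic.taut h)

/-- Deduction theorem: the formulas implied by `B` modulo a theory `T` form the theory generated
by `T` and `B`. -/
theorem IsTheory.adjoin {T : Set BForm} (hT : IsTheory T) (B : BForm) :
    IsTheory {C | BForm.imp B C ∈ T} where
  ax {A} h := hT.mp (hT.taut (A := .imp A (.imp B A)) (by
    intro v; simp only [beval]; cases beval v A <;> cases beval v B <;> rfl)) (hT.ax h)
  mp {A C} h h' := hT.mp (hT.mp (hT.taut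
    (A := .imp (.imp B (.imp A C)) (.imp (.imp B A) (.imp B C))) (by
      intro v; simp only [beval]
      cases beval v A <;> cases beval v B <;> cases beval v C <;> rfl)) h) h'

/-- Lindenbaum's lemma. A theory maximal among those omitting `A` decides every formula `B`:
otherwise both `B → A` and `¬B → A` belong to it. -/
theorem exists_isMaxTheory {T : Set BForm} (hT : IsTheory T) {A : BForm} (hA : A ∉ T) :
    ∃ M, IsMaxTheory M ∧ T ⊆ M ∧ A ∉ M := by
  obtain ⟨M, hTM, hM⟩ := zorn_subset_nonempty {S : Set BForm | IsTheory S ∧ A ∉ S} (by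
    intro c hc hch hne
    refine ⟨⋃₀ c, ⟨⟨fun {B} h => ?_, fun {B C} h h' => ?_⟩, ?_⟩, fun s hs =>
      Set.subset_sUnion_of_mem hs⟩
    · obtain ⟨s, hs⟩ := hne
      exact ⟨s, hs, (hc hs).1.ax h⟩
    · obtain ⟨s, hs, h⟩ := h
      obtain ⟨t, ht, h'⟩ := h'
      rcases hch.total hs ht with hst | hts
      · exact ⟨t, ht, (hc ht).1.mp (hst h) h'⟩
      · exact ⟨s, hs, (hc hs).1.mp h (hts h')⟩
    · rintro ⟨s, hs, h⟩
      exact (hc hs).2 h) T ⟨hT, hA⟩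
  have hMT : IsTheory M := hM.prop.1
  have key : ∀ B, B ∉ M → BForm.imp B A ∈ M := by
    intro B hB
    by_contra hBA
    have hsub : M ⊆ {C | BForm.imp B C ∈ M} := fun C hC =>
      hMT.mp (hMT.taut (A := .imp C (.imp B C)) (by
        intro v; simp only [beval]; cases beval v C <;> cases beval v B <;> rfl)) hC
    have hle := hM.le_of_ge (y := {C | BForm.imp B C ∈ M}) ⟨hMT.adjoin B, hBA⟩ hsub
    refine hB (hle ?_)
    exact hMT.taut (by intro v; simp only [beval]; cases beval v B <;> rfl)
  refine ⟨M, { toIsTheory := hMT, bot := fun h => ?_, compl := fun B => ?_ }, hTM, hM.prop.2⟩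
  · exact hM.prop.2 (hMT.mp (hMT.taut (A := .imp .bot A) (by intro v; simp [beval])) h)
  · by_contra! hB
    refine hM.prop.2 (hMT.mp (hMT.mp (hMT.taut
      (A := .imp (.imp B A) (.imp (.imp (.neg B) A) A)) ?_) (key _ hB.1)) (key _ hB.2))
    intro v; simp only [beval, BForm.neg]
    cases beval v A <;> cases beval v B <;> rfl

theorem IsMaxTheory.imp_iff {T : Set BForm} (hT : IsMaxTheory T) (A B : BForm) :
    BForm.imp A B ∈ T ↔ (A ∈ T → B ∈ T) := by
  refine ⟨fun h h' => hT.mp h h', fun h => ?_⟩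
  rcases hT.compl A with hA | hA
  · exact hT.mp (hT.taut (A := .imp B (.imp A B)) (by
      intro v; simp only [beval]; cases beval v A <;> cases beval v B <;> rfl)) (h hA)
  · exact hT.mp (hT.taut (A := .imp (.neg A) (.imp A B)) (by
      intro v; simp only [beval, BForm.neg]
      cases beval v A <;> cases beval v B <;> rfl)) hA

theorem IsMaxTheory.neg_iff {T : Set BForm} (hT : IsMaxTheory T) (A : BForm) :
    BForm.neg A ∈ T ↔ A ∉ T := by
  rw [BForm.neg, hT.imp_iff]
  exact ⟨fun h h' => hT.bot (h h'), fun h h' => absurd h' h⟩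

theorem IsMaxTheory.conj_iff {T : Set BForm} (hT : IsMaxTheory T) (A B : BForm) :
    BForm.conj A B ∈ T ↔ A ∈ T ∧ B ∈ T := by
  rw [BForm.conj, hT.neg_iff, hT.imp_iff, hT.neg_iff]
  tauto

/-! ### The canonical frame -/

/-- Points of the canonical frame. -/
abbrev MCS : Type := {T : Set BForm // IsMaxTheory T}

/-- The canonical accessibility relation of `□`. -/
def canR (x y : MCS) : Prop := ∀ C, BForm.box C ∈ x.1 → C ∈ y.1

/-- The canonical accessibility relation of `[≠]`. -/
def canRD (x y : MCS) : Prop := ∀ C, BForm.dbox C ∈ x.1 → C ∈ y.1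

theorem isTheory_unbox (x : MCS) : IsTheory {C | BForm.box C ∈ x.1} where
  ax h := x.2.ax (Logic.necBox h)
  mp {A B} h h' := by
    have hK : S4DT1S (.imp (.box (.imp A B)) (.imp (.box A) (.box B))) :=
      Logic.subst (fun n => if n = 0 then A else B) Logic.axKBox
    exact x.2.mp (x.2.mp (x.2.ax hK) h) h'

theorem isTheory_undbox (x : MCS) : IsTheory {C | BForm.dbox C ∈ x.1} where
  ax h := x.2.ax (Logic.necD h)
  mp {A B} h h' := by
    have hK : S4DT1S (.imp (.dbox (.imp A B)) (.imp (.dbox A) (.dbox B))) :=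
      Logic.subst (fun n => if n = 0 then A else B) Logic.axKD
    exact x.2.mp (x.2.mp (x.2.ax hK) h) h'

theorem box_mem_iff (x : MCS) (C : BForm) :
    BForm.box C ∈ x.1 ↔ ∀ y, canR x y → C ∈ y.1 := by
  refine ⟨fun h y hy => hy C h, fun h => ?_⟩
  by_contra hC
  obtain ⟨M, hM, hsub, hCM⟩ := exists_isMaxTheory (isTheory_unbox x) hC
  exact hCM (h ⟨M, hM⟩ fun D hD => hsub hD)

theorem dbox_mem_iff (x : MCS) (C : BForm) :
    BForm.dbox C ∈ x.1 ↔ ∀ y, canRD x y → C ∈ y.1 := by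
  refine ⟨fun h y hy => hy C h, fun h => ?_⟩
  by_contra hC
  obtain ⟨M, hM, hsub, hCM⟩ := exists_isMaxTheory (isTheory_undbox x) hC
  exact hCM (h ⟨M, hM⟩ fun D hD => hsub hD)

theorem exists_mem_not_mem {x y : MCS} (h : x ≠ y) : ∃ D ∈ x.1, D ∉ y.1 := by
  by_contra! hc
  refine h (Subtype.ext (Set.Subset.antisymm hc fun D hD => ?_))
  by_contra hDx
  exact (y.2.neg_iff D).1 (hc _ ((x.2.neg_iff D).2 hDx)) hD

theorem canR_refl (x : MCS) : canR x x := fun C hC =>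
  x.2.mp (x.2.ax (Logic.subst (fun _ => C) Logic.axTBox)) hC

theorem canR_trans {x y z : MCS} (hxy : canR x y) (hyz : canR y z) : canR x z := fun C hC =>
  hyz C (hxy _ (x.2.mp (x.2.ax (Logic.subst (fun _ => C) Logic.ax4Box)) hC))

theorem canRD_symm {x y : MCS} (h : canRD x y) : canRD y x := by
  intro C hC
  by_contra hCx
  have hB : BForm.imp (.neg C) (.dbox (.ddia (.neg C))) ∈ x.1 :=
    x.2.ax (Logic.subst (fun _ => BForm.neg C) Logic.axBD)
  have h1 := h _ (x.2.mp hB ((x.2.neg_iff C).2 hCx))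
  refine (y.2.neg_iff _).1 h1 ((dbox_mem_iff y _).2 fun z hz => ?_)
  rw [z.2.neg_iff, z.2.neg_iff, not_not]
  exact hz C hC

theorem canRD_ptrans {x y z : MCS} (hxy : canRD x y) (hyz : canRD y z) (hne : x ≠ z) :
    canRD x z := by
  intro C hC
  obtain ⟨D, hDx, hDz⟩ := exists_mem_not_mem hne
  -- `E` stands for the disjunction `D ∨ C`, true at `x` and at all `R_D`-successors of `x`
  let E := BForm.imp (.neg D) C
  have hE : E ∈ x.1 := (x.2.imp_iff _ _).2 fun h => absurd hDx ((x.2.neg_iff D).1 h)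
  have hE' : BForm.dbox E ∈ x.1 := (dbox_mem_iff x _).2 fun u hu =>
    (u.2.imp_iff _ _).2 fun _ => hu C hC
  have hax : BForm.imp (.conj E (.dbox E)) (.dbox (.dbox E)) ∈ x.1 :=
    x.2.ax (Logic.subst (fun _ => E) Logic.ax4mD)
  exact z.2.mp (hyz _ (hxy _ (x.2.mp hax ((x.2.conj_iff _ _).2 ⟨hE, hE'⟩))))
    ((z.2.neg_iff D).2 hDz)

theorem canR_inc {x y : MCS} (h : canR x y) : canRD x y ∨ x = y := by
  by_cases hne : x = y
  · exact Or.inr hne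
  refine Or.inl fun C hC => ?_
  obtain ⟨D, hDx, hDy⟩ := exists_mem_not_mem hne
  let E := BForm.imp (.neg D) C
  have hE : E ∈ x.1 := (x.2.imp_iff _ _).2 fun h => absurd hDx ((x.2.neg_iff D).1 h)
  have hE' : BForm.dbox E ∈ x.1 := (dbox_mem_iff x _).2 fun u hu =>
    (u.2.imp_iff _ _).2 fun _ => hu C hC
  have hax : BForm.imp (.conj (.dbox E) E) (.box E) ∈ x.1 :=
    x.2.ax (Logic.subst (fun _ => E) Logic.axDBox)
  exact y.2.mp (h _ (x.2.mp hax ((x.2.conj_iff _ _).2 ⟨hE', hE⟩))) ((y.2.neg_iff D).2 hDy)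

/-- The frame condition expressed by (AT₁). -/
theorem canRD_comp_canR {x y z : MCS} (hxy : canRD x y) (hyz : canR y z) : canRD x z := by
  intro C hC
  have hax : BForm.imp (.dbox C) (.dbox (.box C)) ∈ x.1 :=
    x.2.ax (Logic.subst (fun _ => C) (Logic.extra (A := at1Ax) (by simp)))
  exact hyz C (hxy _ (x.2.mp hax hC))

theorem canR_irrefl_minimal {x y : MCS} (hx : ¬ canRD x x) (hyx : canR y x) : y = x := by
  rcases canR_inc hyx with h | h
  · exact absurd (canRD_comp_canR (canRD_symm h) hyx) hx
  · exact h

theorem canRD_irrefl_dia {x : MCS} (hx : ¬ canRD x x) : ∃ y, y ≠ x ∧ canR x y := by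
  simp only [canRD, not_forall] at hx
  obtain ⟨C, hC, hCx⟩ := hx
  have hax : BForm.imp (.dbox C) (.dia C) ∈ x.1 :=
    x.2.ax (Logic.subst (fun _ => C) (Logic.extra (A := dsAx) (by simp)))
  have h := (x.2.neg_iff _).1 (x.2.mp hax hC)
  rw [box_mem_iff] at h
  push Not at h
  obtain ⟨y, hxy, hy⟩ := h
  refine ⟨y, fun hyx => hy ((y.2.neg_iff C).2 (hyx ▸ hCx)), hxy⟩

/-! ### The subframe generated by a point -/

/-- The points of the canonical frame reachable from `r` by `R_D ∪ Id`. -/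
abbrev Gen (r : MCS) : Type := {x : MCS // x = r ∨ canRD r x}

/-- `canR` restricted to `Gen r`. -/
def genR (r : MCS) (x y : Gen r) : Prop := canR x.1 y.1

/-- `canRD` restricted to `Gen r`. -/
def genRD (r : MCS) (x y : Gen r) : Prop := canRD x.1 y.1

theorem gen_closed_RD {r x y : MCS} (hx : x = r ∨ canRD r x) (h : canRD x y) :
    y = r ∨ canRD r y := by
  rcases hx with rfl | hx
  · exact Or.inr h
  · by_cases hy : y = r
    · exact Or.inl hy
    · exact Or.inr (canRD_ptrans hx h (Ne.symm hy))

theorem gen_closed_R {r x y : MCS} (hx : x = r ∨ canRD r x) (h : canR x y) :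
    y = r ∨ canRD r y := by
  rcases canR_inc h with h | rfl
  · exact gen_closed_RD hx h
  · exact hx

theorem gen_isS4DFrame (r : MCS) : IsS4DFrame (genR r) (genRD r) where
  refl x := canR_refl x.1
  trans _ _ _ h h' := canR_trans h h'
  symm _ _ h := canRD_symm h
  ptrans _ _ _ h h' hne := canRD_ptrans h h' fun he => hne (Subtype.ext he)
  inc _ _ h := (canR_inc h).imp id Subtype.ext

theorem gen_isT1Frame (r : MCS) : IsT1Frame (genR r) (genRD r) :=
  fun _ hx _ hyx => Subtype.ext (canR_irrefl_minimal hx hyx)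

theorem gen_isDSFrame (r : MCS) : IsDSFrame (genR r) (genRD r) := by
  intro x hx
  obtain ⟨y, hne, hxy⟩ := canRD_irrefl_dia hx
  exact ⟨⟨y, gen_closed_R x.2 hxy⟩, fun h => hne (congrArg Subtype.val h), hxy⟩

theorem gen_connected (r : MCS) (x y : Gen r) (hne : x ≠ y) : genRD r x y := by
  have hne' : x.1 ≠ y.1 := fun h => hne (Subtype.ext h)
  rcases x.2 with hx | hx <;> rcases y.2 with hy | hy
  · exact absurd (hx.trans hy.symm) hne'
  · unfold genRD; rw [hx]; exact hy
  · unfold genRD; rw [hy]; exact canRD_symm hx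
  · exact canRD_ptrans (canRD_symm hx) hy hne'

/-- Truth lemma for the canonical valuation on a generated subframe. -/
theorem ksat_canonical (r : MCS) (A : BForm) : ∀ x : Gen r,
    ksat (genR r) (genRD r) (fun n => {y | BForm.var n ∈ y.1.1}) x A ↔ A ∈ x.1.1 := by
  induction A with
  | var n => intro x; rfl
  | bot => intro x; exact ⟨False.elim, x.1.2.bot⟩
  | imp A B ihA ihB => intro x; rw [x.1.2.imp_iff, ksat, ihA, ihB]
  | box A ih =>
    intro x
    rw [box_mem_iff]
    simp only [ksat, ih]
    exact ⟨fun h y hy => h ⟨y, gen_closed_R x.2 hy⟩ hy, fun h y hy => h y.1 hy⟩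
  | dbox A ih =>
    intro x
    rw [dbox_mem_iff]
    simp only [ksat, ih]
    exact ⟨fun h y hy => h ⟨y, gen_closed_RD x.2 hy⟩ hy, fun h y hy => h y.1 hy⟩

/-! ### The space over a frame -/

/-- The space replacing every `RD`-reflexive point `w` by the points `(w, n)`, `n : ℕ`, and every
irreflexive point `w` by the single point `(w, 0)`. The topology depends on `R`, which is
therefore a parameter of the type. -/
def Blowup {W : Type} (_R RD : W → W → Prop) : Type := {p : W × ℕ // RD p.1 p.1 ∨ p.2 = 0}

namespace Blowup

variable {W : Type} {R RD : W → W → Prop}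

/-- The projection of the space onto the frame. -/
def proj (x : Blowup R RD) : W := x.1.1

/-- A set `U` is open if it contains, with a point over `w`, almost all points over each
`R`-successor of `w`. -/
instance : TopologicalSpace (Blowup R RD) where
  IsOpen U := ∀ x ∈ U, ∀ w, R x.proj w → {y : Blowup R RD | y.proj = w ∧ y ∉ U}.Finite
  isOpen_univ := by intro x _ w _; simp
  isOpen_inter := by
    intro U V hU hV x hx w hw
    refine ((hU x hx.1 w hw).union (hV x hx.2 w hw)).subset ?_
    rintro y ⟨hy, hyUV⟩
    by_cases hyU : y ∈ U
    · exact Or.inr ⟨hy, fun hyV => hyUV ⟨hyU, hyV⟩⟩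
    · exact Or.inl ⟨hy, hyU⟩
  isOpen_sUnion := by
    rintro S hS x ⟨U, hU, hxU⟩ w hw
    exact (hS U hU x hxU w hw).subset fun y hy => ⟨hy.1, fun h => hy.2 ⟨U, hU, h⟩⟩

theorem isOpen_def {U : Set (Blowup R RD)} : IsOpen U ↔
    ∀ x ∈ U, ∀ w, R x.proj w → {y : Blowup R RD | y.proj = w ∧ y ∉ U}.Finite := Iff.rfl

theorem infinite_fibre {w : W} (hw : RD w w) : {y : Blowup R RD | y.proj = w}.Infinite := by
  refine Set.infinite_of_injective_forall_mem
    (f := fun n : ℕ => (⟨(w, n), Or.inl hw⟩ : Blowup R RD)) (fun m n h => ?_) fun n => rfl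
  exact congrArg (fun y : Blowup R RD => y.1.2) h

theorem proj_surjective (w : W) : ∃ x : Blowup R RD, x.proj = w := ⟨⟨(w, 0), Or.inr rfl⟩, rfl⟩

theorem eq_of_proj_eq {x y : Blowup R RD} (h : y.proj = x.proj) (hx : ¬ RD x.proj x.proj) :
    y = x := by
  have hx2 : x.1.2 = 0 := x.2.resolve_left hx
  have hy2 : y.1.2 = 0 := y.2.resolve_left (fun hy => hx (by
    have hy' : RD y.proj y.proj := hy
    rwa [h] at hy'))
  exact Subtype.ext (Prod.ext h (hy2.trans hx2.symm))

/-- Any neighbourhood of a point over `w` meets every fibre over an `R`-successor `v` of `w`: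
either that fibre is infinite, or `v` is irreflexive, hence minimal and equal to `w`. -/
theorem exists_mem_fibre (hT1 : IsT1Frame R RD) {U : Set (Blowup R RD)} (hU : IsOpen U)
    {x : Blowup R RD} (hx : x ∈ U) {v : W} (hv : R x.proj v) : ∃ y ∈ U, y.proj = v := by
  by_cases hvv : RD v v
  · by_contra! hc
    exact infinite_fibre (R := R) hvv
      ((isOpen_def.1 hU x hx v hv).subset fun y hy => ⟨hy, fun hyU => hc y hyU hy⟩)
  · exact ⟨x, hx, hT1 v hvv _ hv⟩

theorem isClosed_singleton (x : Blowup R RD) : IsClosed ({x} : Set (Blowup R RD)) := by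
  rw [← isOpen_compl_iff, isOpen_def]
  intro _ _ w _
  refine (Set.finite_singleton x).subset ?_
  rintro y ⟨-, hy⟩
  simpa using hy

theorem not_isOpen_singleton (hF : IsS4DFrame R RD) (hT1 : IsT1Frame R RD) (hDS : IsDSFrame R RD)
    (x : Blowup R RD) : ¬ IsOpen ({x} : Set (Blowup R RD)) := by
  intro h
  by_cases hx : RD x.proj x.proj
  · have hfin := (isOpen_def.1 h x rfl _ (hF.refl _)).union (Set.finite_singleton x)
    refine infinite_fibre (R := R) hx (hfin.subset fun y hy => ?_)
    by_cases hyx : y = x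
    · exact Or.inr hyx
    · exact Or.inl ⟨hy, hyx⟩
  · obtain ⟨v, hne, hv⟩ := hDS _ hx
    obtain ⟨y, hy, rfl⟩ := exists_mem_fibre hT1 h rfl hv
    exact hne (congrArg proj hy)

theorem tsat_iff_ksat (hF : IsS4DFrame R RD) (hT1 : IsT1Frame R RD)
    (hconn : ∀ x y, x ≠ y → RD x y) (θ : ℕ → Set W) (A : BForm) :
    ∀ x : Blowup R RD, tsat (fun n => {y : Blowup R RD | y.proj ∈ θ n}) x A ↔
      ksat R RD θ x.proj A := by
  induction A with
  | var n => intro x; rfl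
  | bot => intro x; rfl
  | imp A B ihA ihB => intro x; simp only [tsat, ksat, ihA, ihB]
  | box A ih =>
    intro x
    simp only [tsat, ksat, ih]
    constructor
    · rintro ⟨U, hU, hxU, h⟩ v hv
      obtain ⟨y, hy, rfl⟩ := exists_mem_fibre hT1 hU hxU hv
      exact h y hy
    · intro h
      refine ⟨{y | R x.proj y.proj}, isOpen_def.2 fun y hy w hw => ?_, hF.refl _,
        fun y hy => h _ hy⟩
      refine Set.finite_empty.subset ?_
      rintro z ⟨rfl, hz⟩
      exact hz (hF.trans hy hw)
  | dbox A ih =>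
    intro x
    simp only [tsat, ksat, ih]
    constructor
    · intro h v hv
      by_cases hvx : v = x.proj
      · subst hvx
        obtain ⟨y, hy, hyx⟩ := (infinite_fibre (R := R) hv).exists_notMem_finite
          (Set.finite_singleton x)
        have := h y hyx
        rwa [show y.proj = x.proj from hy] at this
      · obtain ⟨y, rfl⟩ := proj_surjective (R := R) (RD := RD) v
        exact h y fun hyx => hvx (congrArg proj hyx)
    · intro h y hyx
      refine h _ ?_
      by_contra hRD
      by_cases he : y.proj = x.proj
      · exact hyx (eq_of_proj_eq he (he ▸ hRD))
      · exact hRD (hconn _ _ (Ne.symm he))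

end Blowup

/-- topological completeness of S4DT1S: `A ∈ S4DT1S` iff `A` is valid
in every dense-in-itself T₁ topological space. -/
theorem s4dt1s_topological_completeness (A : BForm) :
    S4DT1S A ↔ ∀ (X : Type) [TopologicalSpace X],
      (∀ x : X, IsClosed ({x} : Set X)) → (∀ x : X, ¬ IsOpen ({x} : Set X)) →
      tvalid X A := by
  refine ⟨fun h X _ hT hD => soundness hT hD h, fun h => ?_⟩
  by_contra hA
  obtain ⟨M, hM, -, hAM⟩ := exists_isMaxTheory isTheory_logic hA
  let r : MCS := ⟨M, hM⟩
  have hF := gen_isS4DFrame r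
  have hT1 := gen_isT1Frame r
  have hval := h (Blowup (genR r) (genRD r)) Blowup.isClosed_singleton
    (Blowup.not_isOpen_singleton hF hT1 (gen_isDSFrame r))
  obtain ⟨x, hx⟩ := Blowup.proj_surjective (R := genR r) (RD := genRD r) ⟨r, Or.inl rfl⟩
  have hk := (Blowup.tsat_iff_ksat hF hT1 (gen_connected r)
    (fun n => {y | BForm.var n ∈ y.1.1}) A x).1 (hval _ x)
  rw [hx] at hk
  exact hAM ((ksat_canonical r A _).1 hk)
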